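/- Let Γ be a finite connected vertex-transitive digraph with vertex-transitive group G ≤ Aut(Γ), and let v be a vertex. If a prime p divides |G_v|, then p divides the order of the permutation group induced by G_v on the set Γ⁺(v) of out-neighbours of v. -/

import Mathlib

/-!
Suppose `p` does not divide the order of the group induced by `G_v` on the out-neighbours of `v`.
By Cauchy's theorem `G_v` contains an element `g` of order `p`. An element of `G_v` with trivial
`p`-th power induces a permutation whose order divides `p` and is coprime to `p`, hence fixes every
out-neighbour of `v`; conjugating by `G`, the same holds at every vertex. So the set of fixed points
of `g` is closed under out-neighbours. For an arc `a → b`, choose `h ∈ G` with `h a = b`: the closed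
walk `a → h a → h² a → ⋯ → a` shows that a set closed under out-neighbours is also closed under
in-neighbours. By connectedness `g` fixes every vertex, contradicting that it has order `p`.
-/

/-- The permutation group induced on the out-neighbours of `v` by the stabiliser of `v` in `G`. -/
def outAction {V : Type*} (A : V → V → Prop) (G : Subgroup (Equiv.Perm V)) (v : V) :
    Subgroup (Equiv.Perm {u : V // A v u}) where
  carrier := {e | ∃ g ∈ G, g v = v ∧ ∀ u : {u : V // A v u}, (e u : V) = g (u : V)}
  one_mem' := ⟨1, G.one_mem, rfl, fun _ => rfl⟩
  mul_mem' := by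
    rintro e f ⟨g, hg, hgv, hge⟩ ⟨k, hk, hkv, hkf⟩
    exact ⟨g * k, G.mul_mem hg hk, by simp [hgv, hkv], fun u => by simp [hge, hkf]⟩
  inv_mem' := by
    rintro e ⟨g, hg, hgv, hge⟩
    refine ⟨g⁻¹, G.inv_mem hg, by rw [Equiv.Perm.inv_eq_iff_eq, hgv], fun u => ?_⟩
    rw [eq_comm, Equiv.Perm.inv_eq_iff_eq, ← hge]
    simp

lemma fixes_out_of_pow_eq_one {V : Type*} [Finite V] (A : V → V → Prop)
    (G : Subgroup (Equiv.Perm V)) (hG : ∀ g ∈ G, ∀ u w : V, A u w ↔ A (g u) (g w))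
    (v : V) {p : ℕ} (hp : p.Prime) (hndvd : ¬ p ∣ Nat.card (outAction A G v))
    {g : Equiv.Perm V} (hg : g ∈ G) (hgv : g v = v) (hgp : g ^ p = 1) {u : V} (hu : A v u) :
    g u = u := by
  have hA : ∀ x, A v (g x) ↔ A v x := fun x => by rw [hG g hg v x, hgv]
  let e : Equiv.Perm {u : V // A v u} := g.subtypePerm hA
  have he : e ∈ outAction A G v := ⟨g, hg, hgv, fun _ => rfl⟩
  have hep : e ^ p = 1 := by
    ext x
    simp [e, Equiv.Perm.subtypePerm_pow, hgp]
  have h1 : e = 1 := by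
    rcases (Nat.dvd_prime hp).1 (orderOf_dvd_of_pow_eq_one hep) with h | h
    · exact orderOf_eq_one_iff.1 h
    · exact absurd (h ▸ Subgroup.orderOf_dvd_natCard _ he) hndvd
  exact congrArg Subtype.val (Equiv.ext_iff.1 h1 ⟨u, hu⟩)

/-- In a finite vertex-transitive digraph, a vertex property passing to out-neighbours also passes
to in-neighbours: an arc `a → h a` lies on the closed walk `a, h a, h² a, …`. -/
lemma closed_in_of_closed_out {V : Type*} [Finite V] (A : V → V → Prop)
    (G : Subgroup (Equiv.Perm V)) (hG : ∀ g ∈ G, ∀ u w : V, A u w ↔ A (g u) (g w))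
    (htrans : ∀ a b : V, ∃ g ∈ G, g a = b) (S : V → Prop) (hS : ∀ a b, A a b → S a → S b)
    {a b : V} (hab : A a b) (hb : S b) : S a := by
  obtain ⟨h, hh, rfl⟩ := htrans a b
  have key : ∀ k : ℕ, S ((h ^ (k + 1)) a) := by
    intro k
    induction k with
    | zero => simpa using hb
    | succ k ih =>
      refine hS _ _ ?_ ih
      have := (hG (h ^ (k + 1)) (G.pow_mem hh _) a (h a)).1 hab
      rwa [← Equiv.Perm.mul_apply, ← pow_succ] at this
  have := key (orderOf h - 1)
  rwa [Nat.sub_add_cancel (orderOf_pos h), pow_orderOf_eq_one] at this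


theorem stmt_3 {V : Type*} [Fintype V]
    (A : V → V → Prop)  -- the arc relation of the digraph Γ
    (hirr : ∀ v, ¬ A v v)
    -- Γ is connected (its underlying graph is connected):
    (hconn : ∀ u v : V, Relation.ReflTransGen (fun a b => A a b ∨ A b a) u v)
    (G : Subgroup (Equiv.Perm V))
    -- G consists of automorphisms of Γ:
    (hG : ∀ g ∈ G, ∀ u w : V, A u w ↔ A (g u) (g w))
    -- G is vertex-transitive:
    (htrans : ∀ a b : V, ∃ g ∈ G, g a = b)
    (v : V) (p : ℕ) (hp : p.Prime)
    -- p divides the order of the stabiliser G_v: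
    (hpdvd : p ∣ Nat.card {g : Equiv.Perm V // g ∈ G ∧ g v = v}) :
    -- p divides the order of the permutation group induced by G_v on Γ⁺(v):
    p ∣ Nat.card {e : Equiv.Perm {u : V // A v u} //
        ∃ g ∈ G, g v = v ∧ ∀ u : {u : V // A v u}, (e u : V) = g (u : V)} := by
  change p ∣ Nat.card (outAction A G v)
  by_contra hnd
  have : Fact p.Prime := ⟨hp⟩
  obtain ⟨⟨g, hmem⟩, hord⟩ := exists_prime_orderOf_dvd_card'
    (G := (G ⊓ MulAction.stabilizer (Equiv.Perm V) v : Subgroup (Equiv.Perm V))) p hpdvd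
  rw [Subgroup.orderOf_mk] at hord
  obtain ⟨hgG, hgv⟩ := Subgroup.mem_inf.1 hmem
  have hgv' : g v = v := hgv
  have hgp : g ^ p = 1 := hord ▸ pow_orderOf_eq_one g
  have hout : ∀ a b, A a b → g a = a → g b = b := by
    intro a b hab ha
    -- Conjugate by an element of `G` carrying `v` to `a`.
    obtain ⟨k, hk, rfl⟩ := htrans v a
    have hfix : (k⁻¹ * g * k) (k⁻¹ b) = k⁻¹ b := by
      refine fixes_out_of_pow_eq_one A G hG v hp hnd
        (G.mul_mem (G.mul_mem (G.inv_mem hk) hgG) hk) ?_ ?_ ?_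
      · simp [ha]
      · have := conj_pow (i := p) (a := k⁻¹) (b := g)
        rw [inv_inv] at this
        simp [this, hgp]
      · rw [hG k hk]
        simpa using hab
    simpa using hfix
  have hall : ∀ w, g w = w := by
    intro w
    induction hconn v w with
    | refl => exact hgv'
    | tail _ hstep ih =>
      rcases hstep with h | h
      · exact hout _ _ h ih
      · exact closed_in_of_closed_out A G hG htrans (fun x => g x = x) hout h ih
  have hg1 : g = 1 := Equiv.ext hall
  rw [hg1, orderOf_one] at hord
  exact hp.one_lt.ne hord
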